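/- Let τ and τ′ be matchings of [2n]. The following are equivalent: (1) τ′ ≤ τ in the uncrossing order; (2) f_τ ≤ f_{τ′} in the affine Bruhat order; (3) I_a(f_τ) ≤_a I_a(f_{τ′}) for every a ∈ [2n], in the a-shifted dominance order on (n−1)-element subsets of [2n]. -/

import Mathlib

open Finset

noncomputable section
open scoped Classical

/-- The cyclic (clockwise) half-open interval `(a, b]` in `Fin m`. -/
def cIoc {m : ℕ} (a b : Fin m) : Finset (Fin m) :=
  univ.filter fun k => if a < b then a < k ∧ k ≤ b else a < k ∨ k ≤ b

/-- The open cyclic (clockwise) arc from `a` to `b` in `Fin m`, excluding both endpoints. -/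
def cIoo {m : ℕ} (a b : Fin m) : Finset (Fin m) :=
  univ.filter fun k => if a < b then a < k ∧ k < b else (a < k ∨ k < b) ∧ k ≠ a ∧ k ≠ b

/-- Set partitions of `[n] = Fin n`. -/
abbrev NCP (n : ℕ) := Finpartition (univ : Finset (Fin n))

/-- `a` and `b` lie in the same block of `σ`. -/
def sameBlock {n : ℕ} (σ : NCP n) (a b : Fin n) : Prop :=
  ∃ B ∈ σ.parts, a ∈ B ∧ b ∈ B

/-- `σ` is a noncrossing partition: there are no `a < b < c < d` with `a, c` in one
block and `b, d` in a different block. -/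
def IsNoncrossing {n : ℕ} (σ : NCP n) : Prop :=
  ∀ a b c d : Fin n, a < b → b < c → c < d →
    sameBlock σ a c → sameBlock σ b d → sameBlock σ a b

/-- The relation defining the dual (Kreweras complement) partition: `ĩ ~ j̃` iff no block
of `σ` meets both cyclic intervals `{(i+1), …, j}` and `{(j+1), …, i}`. -/
def dualRel {n : ℕ} (σ : NCP n) (i j : Fin n) : Prop :=
  i = j ∨ ¬ ∃ B ∈ σ.parts, (B ∩ cIoc i j).Nonempty ∧ (B ∩ cIoc j i).Nonempty

/-- The point `ī` of `[2n]` (0-based: `ī = 2i`). -/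
def bar {n : ℕ} (i : Fin n) : Fin (2*n) := ⟨2*(i:ℕ), by have := i.isLt; omega⟩

/-- The point `ĩ` of `[2n]` (0-based: `ĩ = 2i+1`). -/
def til {n : ℕ} (i : Fin n) : Fin (2*n) := ⟨2*(i:ℕ)+1, by have := i.isLt; omega⟩

/-- A matching (fixed-point-free involution) of `Fin m`. -/
def IsMatching {m : ℕ} (τ : Fin m → Fin m) : Prop :=
  Function.Involutive τ ∧ ∀ i, τ i ≠ i

/-- A noncrossing matching: there are no `a < b < c < d` with `τ a = c` and `τ b = d`. -/
def IsNCMatching {m : ℕ} (τ : Fin m → Fin m) : Prop :=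
  ¬ ∃ a b c d : Fin m, a < b ∧ b < c ∧ c < d ∧ τ a = c ∧ τ b = d

/-- `j` is the cyclic predecessor of `i` in the block of `σ` containing `i`
(`j = i` when `i` is a singleton). -/
def cyclicPred {n : ℕ} (σ : NCP n) (j i : Fin n) : Prop :=
  ∃ B ∈ σ.parts, i ∈ B ∧ j ∈ B ∧ ∀ x ∈ B, x ∉ cIoo j i

/-- `m` is the medial pairing of `σ`: it pairs `ī` (0-based `2i`) with `j̃` (0-based `2j+1`),
where `j` is the cyclic predecessor of `i` in its block. -/
def IsMedialOf {n : ℕ} (σ : NCP n) (m : Fin (2*n) → Fin (2*n)) : Prop :=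
  ∀ i j : Fin n, m (bar i) = til j ↔ cyclicPred σ j i

/-- The crossing number of a matching: the number of pairs `{a,b}` with
`a < b < τ a < τ b`. -/
def crossNum {m : ℕ} (τ : Fin m → Fin m) : ℕ :=
  ((univ : Finset (Fin m × Fin m)).filter fun p =>
    p.1 < p.2 ∧ p.2 < τ p.1 ∧ τ p.1 < τ p.2).card

/-- `a`, `b`, `c`, `d` are distinct and in cyclic order on `Fin m`. -/
def CyclicOrder4 {m : ℕ} (a b c d : Fin m) : Prop :=
  (a < b ∧ b < c ∧ c < d) ∨ (b < c ∧ c < d ∧ d < a) ∨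
  (c < d ∧ d < a ∧ a < b) ∨ (d < a ∧ a < b ∧ b < c)

/-- `τ` covers `τ'` in the uncrossing order. -/
def UncrossCover {m : ℕ} (τ' τ : Fin m → Fin m) : Prop :=
  IsMatching τ' ∧ IsMatching τ ∧
  ∃ a b c d : Fin m, CyclicOrder4 a b c d ∧ τ a = c ∧ τ b = d ∧
    (∀ x, x ≠ a → x ≠ b → x ≠ c → x ≠ d → τ' x = τ x) ∧
    ((τ' a = d ∧ τ' b = c ∧ ∀ x ∈ cIoo a b, τ x ∉ cIoo c d) ∨
     (τ' a = b ∧ τ' c = d ∧ ∀ x ∈ cIoo b c, τ x ∉ cIoo d a))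

/-- The uncrossing partial order on matchings: reflexive-transitive closure of covers. -/
def uncrossLE {m : ℕ} (τ' τ : Fin m → Fin m) : Prop :=
  Relation.ReflTransGen UncrossCover τ' τ

/-- An affine permutation of period `m`. -/
def IsAffinePerm (m : ℕ) (f : ℤ → ℤ) : Prop :=
  Function.Bijective f ∧ ∀ i : ℤ, f (i + m) = f i + m

/-- The length of an affine permutation of period `m`:
`#{(i,j) : 1 ≤ i ≤ m, i < j, f i > f j}`. -/
def affLen (m : ℕ) (f : ℤ → ℤ) : ℕ :=
  Set.ncard {p : ℤ × ℤ | 1 ≤ p.1 ∧ p.1 ≤ (m:ℤ) ∧ p.1 < p.2 ∧ f p.2 < f p.1}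

/-- The affine rank matrix `r_f(i,j) = #{a ≤ i : f a ≥ j}`. -/
def rankMat (f : ℤ → ℤ) (i j : ℤ) : ℕ :=
  Set.ncard {a : ℤ | a ≤ i ∧ j ≤ f a}

/-- Affine Bruhat order via rank matrices. -/
def bruhatLE (f g : ℤ → ℤ) : Prop := ∀ i j : ℤ, rankMat f i j ≤ rankMat g i j

/-- The sum `Σ_{i=1}^m (f i − i)`. -/
def windowSum (m : ℕ) (f : ℤ → ℤ) : ℤ :=
  ∑ i ∈ Finset.range m, (f ((i:ℤ)+1) - ((i:ℤ)+1))

/-- The affine permutation `g_τ` associated to a matching `τ` of `[2n]`: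
on `[2n]`, `g_τ i = τ i` if `τ i > i` and `g_τ i = τ i + 2n` if `τ i < i`,
extended periodically. -/
def gTau (n : ℕ) (τ : Fin (2*n) → Fin (2*n)) (i : ℤ) : ℤ :=
  if h : (i % ((2*n : ℕ) : ℤ)).toNat < 2*n then
    let r : Fin (2*n) := ⟨(i % ((2*n : ℕ) : ℤ)).toNat, h⟩
    (i - i % ((2*n : ℕ) : ℤ)) +
      (if r < τ r then ((τ r : ℕ) : ℤ) else ((τ r : ℕ) : ℤ) + 2*n)
  else i

/-- `f_τ = g_τ − 1`. -/
def fTau (n : ℕ) (τ : Fin (2*n) → Fin (2*n)) (i : ℤ) : ℤ := gTau n τ i - 1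

/-- An electrical affine permutation for `n`. -/
def IsElectrical (n : ℕ) (f : ℤ → ℤ) : Prop :=
  IsAffinePerm (2*n) f ∧
  (∀ i : ℤ, i ≤ f i ∧ f i ≤ i + 2*n - 2) ∧
  windowSum (2*n) f = ((n:ℤ) - 1) * (2*n) ∧
  ∀ i : ℤ, (f (f i + 1) - (i - 1)) % ((2*n : ℕ) : ℤ) = 0

/-- The Grassmann necklace subset `I_a(f) ⊆ [m]`: representatives in `[m]` (0-based) of
`{f b mod m : b < a and f b ≥ a}`. -/
def necklaceI (m : ℕ) (f : ℤ → ℤ) (a : ℤ) : Finset (Fin m) :=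
  univ.filter fun x => ∃ b : ℤ, b < a ∧ a ≤ f b ∧ f b % (m:ℤ) = ((x:ℕ):ℤ)

/-- The dual necklace subset `J_a(f) ⊆ [m]`: representatives in `[m]` (0-based) of
`{b mod m : b < a and f b ≥ a}`. -/
def necklaceJ (m : ℕ) (f : ℤ → ℤ) (a : ℤ) : Finset (Fin m) :=
  univ.filter fun x => ∃ b : ℤ, b < a ∧ a ≤ f b ∧ b % (m:ℤ) = ((x:ℕ):ℤ)

/-- Dominance order on `k`-element subsets of `Fin m`:
the `r`-th smallest element of `I` is at most the `r`-th smallest element of `J`. -/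
def domLE {m : ℕ} (k : ℕ) (I J : Finset (Fin m)) : Prop :=
  ∃ (hI : I.card = k) (hJ : J.card = k),
    ∀ r : Fin k, I.orderEmbOfFin hI r ≤ J.orderEmbOfFin hJ r

/-- `a`-shifted dominance order: rotate so that `a` becomes least, then compare. -/
def sdomLE {m : ℕ} (k : ℕ) (a : Fin m) (I J : Finset (Fin m)) : Prop :=
  domLE k (I.image (· - a)) (J.image (· - a))

/-- `a`-shifted lexicographic order on subsets of `Fin m`. -/
def lexLE {m : ℕ} (a : Fin m) (I J : Finset (Fin m)) : Prop :=
  I = J ∨ List.Lex (· < ·) ((I.image (· - a)).sort (· ≤ ·)) ((J.image (· - a)).sort (· ≤ ·))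

/-- A Catalan subset of `[2n]` (0-based): an `(n−1)`-subset such that the length-`2n`
word with `U` at positions `{0} ∪ {x+1 : x ∈ I}` and `D` elsewhere is a Dyck path. -/
def IsCatalan {n : ℕ} (I : Finset (Fin (2*n))) : Prop :=
  I.card = n - 1 ∧
  ∀ p : ℕ, p ≤ 2*n →
    p ≤ 2 * ((insert 0 (I.image fun x => (x:ℕ)+1)).filter (· < p)).card

/-- Catalan subset with respect to the shifted order `≤_a`. -/
def IsCatalanAt {n : ℕ} (a : Fin (2*n)) (I : Finset (Fin (2*n))) : Prop :=
  IsCatalan (I.image (· - a))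

/-- The set of maxima of `S` with respect to the `a`-shifted order. -/
def maxAt {m : ℕ} (a : Fin m) (S : Finset (Fin m)) : Finset (Fin m) :=
  S.filter fun x => ∀ y ∈ S, y - a ≤ x - a

/-- `I_a(σ)` for a noncrossing partition `σ`: the complement in `[2n]` of the set of
`≤_a`-maxima of the blocks of `σ` (embedded by `bar`) and of the blocks of the dual
partition `σ̃` (embedded by `til`). -/
def IaP {n : ℕ} (σ : NCP n) (a : Fin (2*n)) : Finset (Fin (2*n)) :=
  univ \ ((σ.parts.biUnion fun B => maxAt a (B.image bar)) ∪
          ((univ : Finset (Fin n)).biUnion fun i =>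
            maxAt a ((univ.filter (dualRel σ i)).image til)))

/-- `I` is concordant with `σ`: `I` has `n−1` elements and every block of `σ` and of
its dual `σ̃` contains exactly one element of `[2n] ∖ I`. -/
def Concordant {n : ℕ} (σ : NCP n) (I : Finset (Fin (2*n))) : Prop :=
  I.card = n - 1 ∧
  (∀ B ∈ σ.parts, ((B.image bar) ∩ (univ \ I)).card = 1) ∧
  (∀ i : Fin n, (((univ.filter (dualRel σ i)).image til) ∩ (univ \ I)).card = 1)

/-- `E(I)`: the set of noncrossing partitions concordant with `I`. -/
def ESet {n : ℕ} (I : Finset (Fin (2*n))) : Set (NCP n) :=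
  {σ | IsNoncrossing σ ∧ Concordant σ I}

/-- The maximal minor `Δ_I(X)` on the columns indexed by `I`, in increasing order. -/
def minorOn {k m : ℕ} (X : Matrix (Fin k) (Fin m) ℝ) (I : Finset (Fin m)) : ℝ :=
  if h : I.card = k then (X.submatrix id fun r => I.orderEmbOfFin h r).det else 0

/-- `X` is totally nonnegative: it has full rank `k` and all maximal minors are `≥ 0`. -/
def IsTNN {k m : ℕ} (X : Matrix (Fin k) (Fin m) ℝ) : Prop :=
  X.rank = k ∧ ∀ I : Finset (Fin m), I.card = k → 0 ≤ minorOn X I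

/-- `t` times the matrix unit `E_{p,q}` (0-based indices). -/
def matE (m : ℕ) (p q : ℕ) (t : ℝ) : Matrix (Fin m) (Fin m) ℝ :=
  Matrix.of fun r s => if (r:ℕ) = p ∧ (s:ℕ) = q then t else 0

/-- `x_i(t) = Id + t·E_{i,i+1}` (1-based index `i`). -/
def xB (m i : ℕ) (t : ℝ) : Matrix (Fin m) (Fin m) ℝ := 1 + matE m (i-1) i t

/-- `y_i(t) = Id + t·E_{i+1,i}` (1-based index `i`). -/
def yB (m i : ℕ) (t : ℝ) : Matrix (Fin m) (Fin m) ℝ := 1 + matE m i (i-1) t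

/-- `u_i(t) = x_i(t)·y_{i−1}(t)` (1-based index `i`). -/
def uB (m i : ℕ) (t : ℝ) : Matrix (Fin m) (Fin m) ℝ := xB m i t * yB m (i-1) t

/-- The columns of `X`, extended `n`-periodically to all integer indices (0-based). -/
def colP {k n : ℕ} (X : Matrix (Fin k) (Fin n) ℝ) (i : ℤ) : Fin k → ℝ :=
  fun r => if h : (i % (n:ℤ)).toNat < n then X r ⟨(i % (n:ℤ)).toNat, h⟩ else 0

/-- `f_X(i) = min { j ≥ i : v_i ∈ span(v_{i+1}, …, v_j) }` (0-based columns). -/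
def fX {k n : ℕ} (X : Matrix (Fin k) (Fin n) ℝ) (i : ℤ) : ℤ :=
  sInf {j : ℤ | i ≤ j ∧ colP X i ∈ Submodule.span ℝ (colP X '' Set.Ioc i j)}

/-- Fintype instance for finite partitions of a finite set. -/
instance {α : Type*} [DecidableEq α] [Fintype α] (s : Finset α) : Fintype (Finpartition s) :=
  Fintype.ofInjective Finpartition.parts fun _ _ h => Finpartition.ext h

/-- The sorted list of (the values of) a subset of `Fin m`. -/
def sortedL {m : ℕ} (I : Finset (Fin m)) : List ℕ :=
  (I.sort (· ≤ ·)).map Fin.val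

/-- The number of inversions of a list (= the number of adjacent transpositions
needed to sort it, when entries are distinct). -/
def invNum (l : List ℕ) : ℕ :=
  ((Finset.range l.length ×ˢ Finset.range l.length).filter fun pq =>
    pq.1 < pq.2 ∧ l.getD pq.2 0 < l.getD pq.1 0).card

/-- The subset of `Fin m` whose values lie in the list `l`. -/
def toFinF {m : ℕ} (l : List ℕ) : Finset (Fin m) :=
  univ.filter fun x => (x:ℕ) ∈ l

/-- The double sum `Σ_{σ ∈ E(l), κ ∈ E(l')} L σ · L κ`, where `E` of a list with a
repeated entry (or an out-of-range entry) is empty. -/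
def pairSum {n : ℕ} (L : NCP n → ℝ) (l l' : List ℕ) : ℝ :=
  if (l.Nodup ∧ ∀ x ∈ l, x < 2*n) ∧ (l'.Nodup ∧ ∀ x ∈ l', x < 2*n) then
    ∑ᶠ σ ∈ ESet (n := n) (toFinF l), ∑ᶠ κ ∈ ESet (n := n) (toFinF l'), L σ * L κ
  else 0

/-- The list obtained from `LI` by replacing its entries at the positions in `S`
(in increasing order of position) by the first `#S` entries of `LJ`. -/
def swapI (LI LJ : List ℕ) (S : Finset ℕ) : List ℕ :=
  (List.range LI.length).map fun p =>
    if p ∈ S then LJ.getD ((S.filter (· < p)).card) 0 else LI.getD p 0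

/-- The list obtained from `LJ` by replacing its first `#S` entries by the entries of
`LI` at the positions in `S`, in increasing order. -/
def swapJ (LI LJ : List ℕ) (S : Finset ℕ) : List ℕ :=
  (List.range LJ.length).map fun p =>
    if p < S.card then LI.getD ((S.sort (· ≤ ·)).getD p 0) 0 else LJ.getD p 0

/-! A matching is encoded by its lift `g = g_τ` to `ℤ`, and `g` by the numbers of pairs contained in
arcs. All three conditions say that every arc contains at least as many pairs of `τ'` as of `τ`:
an affine rank counts the pairs inside one arc, and the elements of `I_a` that are `≥_a t` count the
pairs inside the arc `(t, a)`. The number of pairs in an arc and in its complement differ by a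
quantity independent of the matching, so only the arcs avoiding a chosen point matter.

Uncrossing `{a, c}, {b, d}` to `{a, d}, {b, c}` adds one pair to the arcs avoiding `a` that contain
`b, c` but not `d`, and none to the other arcs avoiding `a`. Conversely, if `τ` has at most as many
pairs as `τ' ≠ τ` in every arc, a shortest pair of `τ'` missing from `τ` locates a crossing of `τ`
which can be uncrossed without violating these inequalities; this can be repeated only finitely many
times. -/

/-! ### Counting pairs in arcs -/

/-- The lift to `ℤ` of a fixed-point-free involution of `ℤ / m`, sending each integer to the first
integer after it that represents its partner. -/
structure IsPairingLift (m : ℕ) (g : ℤ → ℤ) : Prop where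
  lt_apply : ∀ i, i < g i
  apply_lt : ∀ i, g i < i + m
  apply_apply : ∀ i, g (g i) = i + m

/-- The number of pairs of the lift `g` lying inside the arc `[x, y]`, each counted at its first
point. Uncrossing order, affine Bruhat order and necklace dominance are all compared through it. -/
def pairCount (g : ℤ → ℤ) (x y : ℤ) : ℕ := #{i ∈ Icc x y | g i ≤ y}

lemma pairCount_of_lt {g : ℤ → ℤ} {x y : ℤ} (h : y < x) : pairCount g x y = 0 := by
  simp [pairCount, Icc_eq_empty h.not_ge]

namespace IsPairingLift

variable {m : ℕ} {g g' : ℤ → ℤ}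

lemma apply_add (hg : IsPairingLift m g) (i : ℤ) : g (i + m) = g i + m := by
  rw [← hg.apply_apply i, hg.apply_apply]

lemma apply_add_zsmul (hg : IsPairingLift m g) (i k : ℤ) :
    g (i + k • (m : ℤ)) = g i + k • (m : ℤ) :=
  AddConstMapClass.map_add_zsmul (⟨g, hg.apply_add⟩ : AddConstMap ℤ ℤ (m : ℤ) m) i k

lemma apply_eq_iff (hg : IsPairingLift m g) {i j : ℤ} : g i = j ↔ i = g j - m := by
  have hi := hg.apply_apply i
  have hj := hg.apply_add (g j - m)
  rw [sub_add_cancel, hg.apply_apply] at hj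
  constructor <;> rintro rfl <;> omega

lemma injective (hg : IsPairingLift m g) : Function.Injective g := fun _ _ h =>
  (hg.apply_eq_iff.1 h).trans (hg.apply_eq_iff.1 rfl).symm

lemma pos (hg : IsPairingLift m g) : 0 < m := by
  have := hg.lt_apply 0
  have := hg.apply_lt 0
  omega

lemma pairCount_eq_add_card (hg : IsPairingLift m g) {x z : ℤ} (hxz : x ≤ z) (y : ℤ) :
    pairCount g x y = pairCount g z y + #{i ∈ Ico x z | g i ≤ y} := by
  rw [pairCount, pairCount, ← card_union_of_disjoint]
  · congr 1
    ext i
    have := hg.lt_apply i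
    simp only [mem_filter, mem_Icc, mem_union, mem_Ico]
    omega
  · simp only [disjoint_left, mem_filter, mem_Icc, mem_Ico]
    omega

lemma pairCount_succ_left (hg : IsPairingLift m g) (x y : ℤ) :
    pairCount g x y = pairCount g (x + 1) y + if g x ≤ y then 1 else 0 := by
  rw [hg.pairCount_eq_add_card (by omega : x ≤ x + 1), ← Order.succ_eq_add_one,
    Ico_succ_right_eq_Icc, Icc_self, filter_singleton]
  split_ifs <;> rfl

lemma pairCount_pred_right (hg : IsPairingLift m g) (x y : ℤ) :
    pairCount g x y = pairCount g x (y - 1) + if x ≤ g y - m then 1 else 0 := by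
  have hlast (i : ℤ) : g i = y ↔ i = g y - m := hg.apply_eq_iff
  have hfilter : ({i ∈ Icc x y | g i ≤ y} : Finset ℤ) =
      {i ∈ Icc x (y - 1) | g i ≤ y - 1} ∪ if x ≤ g y - m then {g y - m} else ∅ := by
    have := hg.apply_lt y
    ext i
    have := hg.lt_apply i
    have := hlast i
    split_ifs <;>
      simp only [mem_union, mem_filter, mem_Icc, mem_singleton, notMem_empty, or_false] <;> omega
  rw [pairCount, hfilter, card_union_of_disjoint]
  · split_ifs <;> rfl
  · have := hlast (g y - m)
    split_ifs
    · simp only [disjoint_singleton_right, mem_filter]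
      omega
    · exact disjoint_empty_right _

lemma pairCount_add_zsmul (hg : IsPairingLift m g) (x y k : ℤ) :
    pairCount g (x + k • (m : ℤ)) (y + k • (m : ℤ)) = pairCount g x y := by
  rw [pairCount, ← map_add_right_Icc, filter_map, card_map, pairCount]
  simp only [Function.comp_def, addRightEmbedding_apply, hg.apply_add_zsmul, add_le_add_iff_right]

/-- The identity is periodic in `x` because moving one point from the arc to its complement changes
the difference of the two counts by one, whichever side the partner of the point is on. -/
lemma two_mul_pairCount_sub_compl (hg : IsPairingLift m g) (x y : ℤ) :
    2 * (pairCount g x y - pairCount g (y + 1 - m) (x - 1) : ℤ) = 2 * (y + 1 - x) - m := by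
  let F (x : ℤ) : ℤ := pairCount g x y - pairCount g (y + 1 - m) (x - 1) + x
  have hF : Function.Periodic F 1 := fun x => by
    have hleft := hg.pairCount_succ_left x y
    have hright := hg.pairCount_pred_right (y + 1 - m) x
    simp only [F, add_sub_cancel_right]
    split_ifs at hleft hright <;> omega
  have hFx (x : ℤ) : F x = F 0 := by simpa using hF.int_mul_eq x
  have hempty := hFx (y + 1)
  have hfull := hFx (y + 1 - m)
  have hx := hFx x
  have := hg.pos
  simp only [F, add_sub_cancel_right, pairCount_of_lt (show y < y + 1 by omega),
    pairCount_of_lt (show y + 1 - m - 1 < y + 1 - m by omega)] at hempty hfull hx ⊢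
  omega

lemma two_mul_pairCount_period (hg : IsPairingLift m g) (x : ℤ) :
    2 * pairCount g x (x + m - 1) = m := by
  have hcompl := hg.two_mul_pairCount_sub_compl x (x + m - 1)
  rw [pairCount_of_lt (show x - 1 < x + m - 1 + 1 - m by omega)] at hcompl
  omega

/-- An arc through `a` has a complement avoiding `a`, and the two counts determine each other. -/
lemma pairCount_le_of_avoiding (hg : IsPairingLift m g) (hg' : IsPairingLift m g') (a : ℤ)
    (h : ∀ x y, a < x → y < a + m → pairCount g x y ≤ pairCount g' x y) :
    pairCount g ≤ pairCount g' := by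
  simp only [Pi.le_def]
  intro x y
  obtain ⟨k, ⟨hax, hxa⟩, -⟩ :=
    existsUnique_add_zsmul_mem_Ioc (Int.natCast_pos.2 hg.pos) x a
  rw [← hg.pairCount_add_zsmul x y k, ← hg'.pairCount_add_zsmul x y k]
  generalize x + k • (m : ℤ) = x, y + k • (m : ℤ) = y at hax hxa ⊢
  by_cases hy : y < a + m
  · exact h x y hax hy
  · have hcompl := h (y + 1 - m) (x - 1) (by omega) (by omega)
    have := hg.two_mul_pairCount_sub_compl x y
    have := hg'.two_mul_pairCount_sub_compl x y
    omega

end IsPairingLift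

/-! ### Uncrossing a lift -/

/-- `g''` is obtained from the pairing lift `g` by replacing the crossing pairs `{a, c}`, `{b, d}`
with `{a, d}`, `{b, c}`; only one period is described, the rest following by periodicity. -/
structure IsUncrossing (m : ℕ) (g g'' : ℤ → ℤ) (a b c d : ℤ) : Prop where
  lt_ab : a < b
  lt_bc : b < c
  lt_cd : c < d
  lt_da : d < a + m
  apply_a : g a = c
  apply_b : g b = d
  apply_b' : g'' b = c
  apply_d' : g'' d = a + m
  agree : ∀ i, a < i → i < a + m → i ≠ b → i ≠ c → i ≠ d → g'' i = g i

namespace IsUncrossing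

variable {m : ℕ} {g g' g'' : ℤ → ℤ} {a b c d : ℤ}

lemma pairCount_eq (hu : IsUncrossing m g g'' a b c d) (hg : IsPairingLift m g)
    (hg'' : IsPairingLift m g'') {x y : ℤ} (hax : a < x) (hya : y < a + m) :
    pairCount g'' x y = pairCount g x y + if x ≤ b ∧ c ≤ y ∧ y < d then 1 else 0 := by
  obtain ⟨hab, hbc, hcd, hda, ga, gb, gb'', gd'', hagree⟩ := hu
  have gc : g c = a + m := by rw [← ga, hg.apply_apply]
  have gd : g d = b + m := by rw [← gb, hg.apply_apply]
  have gc'' : g'' c = b + m := by rw [← gb'', hg''.apply_apply]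
  have hpair (i : ℤ) (hi : i ∈ Icc x y) :
      g'' i ≤ y ↔ g i ≤ y ∨ (i = b ∧ c ≤ y ∧ y < d) := by
    rw [mem_Icc] at hi
    by_cases hb : i = b
    · subst hb; omega
    by_cases hc : i = c
    · subst hc; omega
    by_cases hd : i = d
    · subst hd; omega
    have := hagree i (by omega) (by omega) hb hc hd
    omega
  rw [pairCount, filter_congr hpair, filter_or, card_union_of_disjoint]
  · congr 1
    split_ifs with h
    · rw [card_eq_one]
      refine ⟨b, ?_⟩
      ext i
      simp only [mem_filter, mem_Icc, mem_singleton]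
      omega
    · simp only [card_eq_zero, filter_eq_empty_iff, mem_Icc]
      omega
  · simp only [disjoint_filter]
    rintro i - hi ⟨rfl, -, hyd⟩
    omega

lemma pairCount_lt (hu : IsUncrossing m g g'' a b c d) (hg : IsPairingLift m g)
    (hg'' : IsPairingLift m g'') : pairCount g < pairCount g'' := by
  obtain ⟨hab, _, _, _, -⟩ := id hu
  refine lt_of_le_of_ne (hg.pairCount_le_of_avoiding hg'' a fun x y hax hya => ?_) fun heq => ?_
  · rw [hu.pairCount_eq hg hg'' hax hya]
    exact Nat.le_add_right _ _
  · have hgain := hu.pairCount_eq hg hg'' (x := b) (y := c) hab (by omega)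
    rw [if_pos (by omega), heq] at hgain
    omega

lemma pairCount_le (hu : IsUncrossing m g g'' a b c d) (hg : IsPairingLift m g)
    (hg'' : IsPairingLift m g'') (hg' : IsPairingLift m g') (hle : pairCount g ≤ pairCount g')
    (hlt : ∀ x y, a < x → x ≤ b → c ≤ y → y < d → pairCount g x y < pairCount g' x y) :
    pairCount g'' ≤ pairCount g' := by
  refine hg''.pairCount_le_of_avoiding hg' a fun x y hax hya => ?_
  rw [hu.pairCount_eq hg hg'' hax hya]
  split_ifs with h
  · exact hlt x y hax h.1 h.2.1 h.2.2
  · exact hle x y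

end IsUncrossing

namespace IsPairingLift

variable {m : ℕ} {g g' : ℤ → ℤ} {b : ℤ}

/-- A pair of `g'` inside the arc is shorter than that of `b`, hence shared with `g`. -/
lemma pairCount_eq_of_minimalFor (hg' : IsPairingLift m g') (hle : pairCount g ≤ pairCount g')
    (hb : MinimalFor (fun i => g i ≠ g' i) (fun i => (g' i - i).toNat) b) :
    pairCount g (b + 1) (g' b - 1) = pairCount g' (b + 1) (g' b - 1) := by
  refine le_antisymm (hle _ _) (card_le_card fun i => ?_)
  simp only [mem_filter, mem_Icc]
  rintro ⟨hi, hi'⟩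
  have hshared : g i = g' i := by
    by_contra hne
    have := hb.2 hne
    have := hg'.lt_apply b
    grind
  exact ⟨hi, hshared ▸ hi'⟩

lemma apply_lt_of_minimalFor (hg : IsPairingLift m g) (hg' : IsPairingLift m g')
    (hle : pairCount g ≤ pairCount g')
    (hb : MinimalFor (fun i => g i ≠ g' i) (fun i => (g' i - i).toNat) b) : g' b < g b := by
  refine lt_of_le_of_ne (not_lt.1 fun hlt => ?_) hb.1.symm
  have hinside := hg'.pairCount_eq_of_minimalFor hle hb
  have hcount : pairCount g b (g' b - 1) ≤ pairCount g' b (g' b - 1) := hle _ _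
  rw [hg.pairCount_succ_left, hg'.pairCount_succ_left, if_pos (by omega), if_neg (by omega),
    hinside] at hcount
  omega

lemma pairCount_lt_of_forall_notMem (hg : IsPairingLift m g) (hg' : IsPairingLift m g')
    (hle : pairCount g ≤ pairCount g')
    (hb : MinimalFor (fun i => g i ≠ g' i) (fun i => (g' i - i).toNat) b)
    {x y : ℤ} (hxb : x ≤ b) (hby : g' b ≤ y) (hyb : y < g b)
    (hx : ∀ i ∈ Ico x b, g i ∉ Ico (g' b) (g b)) :
    pairCount g x y < pairCount g' x y := by
  have hinside := hg'.pairCount_eq_of_minimalFor hle hb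
  have hsame : #{i ∈ Ico x (b + 1) | g i ≤ y} = #{i ∈ Ico x (b + 1) | g i ≤ g' b - 1} := by
    refine congrArg card (filter_congr fun i hi => ?_)
    have := hx i
    grind
  have hmore : #{i ∈ Ico x (b + 1) | g' i ≤ g' b - 1} < #{i ∈ Ico x (b + 1) | g' i ≤ y} := by
    refine card_lt_card ⟨monotone_filter_right _ fun i _ hi => by omega, fun hsub => ?_⟩
    have := @hsub b
    grind
  have : pairCount g (b + 1) y ≤ pairCount g' (b + 1) y := hle _ _
  have : pairCount g x (g' b - 1) ≤ pairCount g' x (g' b - 1) := hle _ _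
  have hxb' : x ≤ b + 1 := by omega
  have := hg.pairCount_eq_add_card hxb' y
  have := hg.pairCount_eq_add_card hxb' (g' b - 1)
  have := hg'.pairCount_eq_add_card hxb' y
  have := hg'.pairCount_eq_add_card hxb' (g' b - 1)
  omega

/-- Otherwise `g'` would have more pairs than `g` in an arc of full length, where every lift has
`m / 2` of them. -/
lemma exists_crossing (hg : IsPairingLift m g) (hg' : IsPairingLift m g')
    (hle : pairCount g ≤ pairCount g')
    (hb : MinimalFor (fun i => g i ≠ g' i) (fun i => (g' i - i).toNat) b) :
    ({i ∈ Ioo (g b - m) b | g i ∈ Ico (g' b) (g b)} : Finset ℤ).Nonempty := by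
  have hb' := hg.apply_lt_of_minimalFor hg' hle hb
  have hback : g (g b - m) = b := hg.apply_eq_iff.2 rfl
  have := hg.apply_lt b
  have := hg'.lt_apply b
  by_contra hempty
  have hlt : pairCount g (g b - m) (g b - 1) < pairCount g' (g b - m) (g b - 1) := by
    refine hg.pairCount_lt_of_forall_notMem hg' hle hb (by omega) (by omega) (by omega) ?_
    intro i hi hgi
    refine hempty ⟨i, ?_⟩
    grind
  have hfull := hg.two_mul_pairCount_period (g b - m)
  have hfull' := hg'.two_mul_pairCount_period (g b - m)
  rw [sub_add_cancel] at hfull hfull'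
  omega

/-- Take `b` to start a shortest pair of `g'` not in `g`, and `a` to be the last point before `b`
whose partner under `g` lies in `[g' b, g b)`. -/
lemma exists_uncrossable (hg : IsPairingLift m g) (hg' : IsPairingLift m g')
    (hne : g ≠ g') (hle : pairCount g ≤ pairCount g') :
    ∃ a b c d : ℤ, a < b ∧ b < c ∧ c < d ∧ d < a + m ∧ g a = c ∧ g b = d ∧
      (∀ i ∈ Ioo a b, g i ∉ Ioo c d) ∧
      ∀ x y, a < x → x ≤ b → c ≤ y → y < d → pairCount g x y < pairCount g' x y := by
  obtain ⟨b, hb⟩ := exists_minimalFor_of_wellFoundedLT _ (fun i => (g' i - i).toNat)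
    (Function.ne_iff.1 hne)
  obtain ⟨a, ha, hmax⟩ := exists_max_image _ id (hg.exists_crossing hg' hle hb)
  simp only [mem_filter, mem_Ioo, mem_Ico, id_eq] at ha hmax
  have := hg'.lt_apply b
  refine ⟨a, b, g a, g b, by omega, by omega, by omega, by omega, rfl, rfl, ?_, ?_⟩
  · grind
  · intro x y hax hxb hcy hyd
    refine hg.pairCount_lt_of_forall_notMem hg' hle hb hxb (by omega) hyd ?_
    grind

end IsPairingLift
/-! ### Matchings of `Fin m` and their lifts -/

lemma IsMatching.exists_uncross {m : ℕ} {τ : Fin m → Fin m} (hτ : IsMatching τ) {a b c d : Fin m}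
    (ha : τ a = c) (hb : τ b = d) (had : a ≠ d) (hbc : b ≠ c) :
    ∃ τ'', IsMatching τ'' ∧ τ'' a = d ∧ τ'' b = c ∧
      ∀ x, x ≠ a → x ≠ b → x ≠ c → x ≠ d → τ'' x = τ x := by
  let e := Equiv.swap c d
  have hac : a ≠ c := fun h => hτ.2 a (ha.trans h.symm)
  have hbd : b ≠ d := fun h => hτ.2 b (hb.trans h.symm)
  refine ⟨fun x => e (τ (e x)), ⟨fun x => ?_, fun x hx => hτ.2 (e x) ?_⟩, ?_, ?_, ?_⟩
  · simp only [e, Equiv.swap_apply_self, hτ.1 _]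
  · exact Equiv.swap_apply_eq_iff.1 hx
  · simp only [e, Equiv.swap_apply_of_ne_of_ne hac had, ha, Equiv.swap_apply_left]
  · simp only [e, Equiv.swap_apply_of_ne_of_ne hbc hbd, hb, Equiv.swap_apply_right]
  · intro x hxa hxb hxc hxd
    have hc : τ x ≠ c := fun h => hxa (hτ.1.injective (h.trans ha.symm))
    have hd : τ x ≠ d := fun h => hxb (hτ.1.injective (h.trans hb.symm))
    simp only [e, Equiv.swap_apply_of_ne_of_ne hxc hxd, Equiv.swap_apply_of_ne_of_ne hc hd]

section

open Fin.CommRing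

section Residues

variable {m : ℕ} [NeZero m]

lemma natCast_val_intCast (z : ℤ) : (((z : Fin m) : ℕ) : ℤ) = z % m := by
  rw [Fin.val_intCast, Int.toNat_of_nonneg (Int.emod_nonneg z (NeZero.ne _))]

lemma emod_eq_val_iff {z : ℤ} {x : Fin m} : z % m = (x : ℕ) ↔ (z : Fin m) = x := by
  rw [Fin.ext_iff, ← natCast_val_intCast, Int.natCast_inj]

lemma val_intCast_eq_or {p z : ℤ} (hpz : p ≤ z) (hz : z < p + m) :
    (((z : Fin m) : ℕ) : ℤ) = (p : Fin m).val + (z - p) ∨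
      (((z : Fin m) : ℕ) : ℤ) = (p : Fin m).val + (z - p) - m := by
  have hmod : ((z : Fin m) : ℤ) = ((p : Fin m).val + (z - p)) % m := by
    rw [natCast_val_intCast, natCast_val_intCast, Int.emod_add_emod, add_sub_cancel]
  have := (p : Fin m).isLt
  by_cases hlt : (p : Fin m).val + (z - p) < m
  · rw [Int.emod_eq_of_lt (by omega) hlt] at hmod
    exact .inl hmod
  · rw [← Int.sub_emod_right, Int.emod_eq_of_lt (by omega) (by omega)] at hmod
    exact .inr hmod

lemma intCast_add_period (z : ℤ) : ((z + m : ℤ) : Fin m) = z := by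
  simp only [Int.cast_add, Int.cast_natCast, Fin.natCast_self, add_zero]

lemma intCast_injOn_Ico (p : ℤ) : Set.InjOn (Int.cast : ℤ → Fin m) (Set.Ico p (p + m)) := by
  rintro y ⟨hy, hy'⟩ z ⟨hz, hz'⟩ hyz
  rw [CharP.intCast_eq_intCast (Fin m) m, Int.modEq_iff_dvd] at hyz
  have := Int.eq_zero_of_abs_lt_dvd hyz (by grind)
  omega

lemma exists_intCast_eq (p : ℤ) (x : Fin m) : ∃ z ∈ Set.Ico p (p + m), (z : Fin m) = x := by
  obtain ⟨k, hk, -⟩ := existsUnique_add_zsmul_mem_Ico (Int.natCast_pos.2 (NeZero.pos m)) (x : ℤ) p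
  exact ⟨_, hk, by simp⟩

lemma exists_intCast_eq_of_mem_cIoo {p q : ℤ} (hpq : p < q) (hqp : q < p + m) {x : Fin m}
    (hx : x ∈ cIoo (p : Fin m) q) : ∃ z ∈ Ioo p q, (z : Fin m) = x := by
  obtain ⟨z, ⟨hpz, hzp⟩, rfl⟩ := exists_intCast_eq p x
  refine ⟨z, ?_, rfl⟩
  have := val_intCast_eq_or hpz hzp
  have := val_intCast_eq_or hpq.le hqp
  simp only [cIoo, mem_filter_univ, Fin.lt_def, Ne, Fin.ext_iff, mem_Ioo] at hx ⊢
  split_ifs at hx <;> omega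

lemma cyclicOrder4_iff_exists_intCast {A B C D : Fin m} : CyclicOrder4 A B C D ↔
    ∃ a b c d : ℤ, (a < b ∧ b < c ∧ c < d ∧ d < a + m) ∧
      (a : Fin m) = A ∧ (b : Fin m) = B ∧ (c : Fin m) = C ∧ (d : Fin m) = D := by
  constructor
  · intro h
    obtain ⟨b, ⟨hb, hb'⟩, rfl⟩ := exists_intCast_eq A B
    obtain ⟨c, ⟨hc, hc'⟩, rfl⟩ := exists_intCast_eq A C
    obtain ⟨d, ⟨hd, hd'⟩, rfl⟩ := exists_intCast_eq A D
    have hA : (((A : ℕ) : ℤ) : Fin m) = A := by simp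
    have := val_intCast_eq_or hb hb'
    have := val_intCast_eq_or hc hc'
    have := val_intCast_eq_or hd hd'
    refine ⟨A, b, c, d, ?_, hA, rfl, rfl, rfl⟩
    simp only [CyclicOrder4, Fin.lt_def, hA] at *
    omega
  · rintro ⟨a, b, c, d, ⟨hab, hbc, hcd, hda⟩, rfl, rfl, rfl, rfl⟩
    have := val_intCast_eq_or (m := m) (by omega : a ≤ b) (by omega)
    have := val_intCast_eq_or (m := m) (by omega : a ≤ c) (by omega)
    have := val_intCast_eq_or (m := m) (by omega : a ≤ d) (by omega)
    simp only [CyclicOrder4, Fin.lt_def]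
    omega

end Residues

section GTau

variable {n : ℕ} [NeZero n] {τ τ' : Fin (2 * n) → Fin (2 * n)}

lemma gTau_eq_ite (τ : Fin (2 * n) → Fin (2 * n)) (i : ℤ) :
    gTau n τ i = i - (i : Fin (2 * n)).val +
      if (i : Fin (2 * n)) < τ i then ((τ i : ℕ) : ℤ) else (τ i : ℕ) + 2 * n := by
  have hmod := natCast_val_intCast (m := 2 * n) i
  have hi : (i % ((2 * n : ℕ) : ℤ)).toNat = (i : Fin (2 * n)).val := by omega
  simp only [gTau, hi, Fin.is_lt, dite_true, Fin.eta, hmod]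

lemma gTau_mem_Ioo (hτ : ∀ x, τ x ≠ x) (i : ℤ) :
    gTau n τ i ∈ Set.Ioo i (i + (2 * n : ℕ)) := by
  have := (τ i).isLt
  have := (i : Fin (2 * n)).isLt
  have := Fin.val_ne_of_ne (hτ i)
  rw [gTau_eq_ite, Set.mem_Ioo]
  simp only [Fin.lt_def]
  split_ifs <;> omega

lemma intCast_gTau (hτ : ∀ x, τ x ≠ x) (i : ℤ) : (gTau n τ i : Fin (2 * n)) = τ i := by
  obtain ⟨hlt, hgt⟩ := gTau_mem_Ioo hτ i
  have := val_intCast_eq_or hlt.le hgt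
  have := (τ i).isLt
  ext
  rw [gTau_eq_ite] at *
  simp only [Fin.lt_def] at *
  split_ifs at * <;> omega

lemma gTau_eq_iff (hτ : ∀ x, τ x ≠ x) {i z : ℤ} :
    gTau n τ i = z ↔ i < z ∧ z < i + (2 * n : ℕ) ∧ τ i = z := by
  have hmem := gTau_mem_Ioo hτ i
  constructor
  · rintro rfl
    exact ⟨hmem.1, hmem.2, (intCast_gTau hτ i).symm⟩
  · rintro ⟨hiz, hzi, hz⟩
    exact intCast_injOn_Ico i (Set.Ioo_subset_Ico_self hmem) ⟨hiz.le, hzi⟩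
      ((intCast_gTau hτ i).trans hz)

lemma isPairingLift_gTau (hτ : IsMatching τ) : IsPairingLift (2 * n) (gTau n τ) where
  lt_apply i := (gTau_mem_Ioo hτ.2 i).1
  apply_lt i := (gTau_mem_Ioo hτ.2 i).2
  apply_apply i := by
    obtain ⟨hlt, hgt⟩ := gTau_mem_Ioo hτ.2 i
    refine (gTau_eq_iff hτ.2).2 ⟨hgt, by omega, ?_⟩
    rw [intCast_gTau hτ.2, hτ.1, intCast_add_period]

lemma gTau_injOn : Set.InjOn (gTau n) {τ | IsMatching τ} := by
  intro τ hτ τ' hτ' h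
  ext1 x
  obtain ⟨i, -, rfl⟩ := exists_intCast_eq 0 x
  rw [← intCast_gTau hτ.2, ← intCast_gTau hτ'.2, h]

/-! ### The uncrossing order -/

lemma isUncrossing_gTau {τ'' : Fin (2 * n) → Fin (2 * n)} (hτ : IsMatching τ)
    (hτ'' : IsMatching τ'') {a b c d : ℤ}
    (hord : a < b ∧ b < c ∧ c < d ∧ d < a + (2 * n : ℕ)) (ha : τ a = c) (hb : τ b = d)
    (ha'' : τ'' a = d) (hb'' : τ'' b = c)
    (hagree : ∀ x : Fin (2 * n), x ≠ a → x ≠ b → x ≠ c → x ≠ d → τ'' x = τ x) :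
    IsUncrossing (2 * n) (gTau n τ) (gTau n τ'') a b c d := by
  obtain ⟨hab, hbc, hcd, hda⟩ := hord
  have hne {i j : ℤ} (hi : a < i ∧ i < a + (2 * n : ℕ)) (hj : a ≤ j ∧ j < a + (2 * n : ℕ)) :
      i ≠ j → (i : Fin (2 * n)) ≠ j :=
    (intCast_injOn_Ico a).ne ⟨hi.1.le, hi.2⟩ hj
  refine ⟨hab, hbc, hcd, hda, ?_, ?_, ?_, ?_, fun i hai hia hib hic hid => ?_⟩
  · exact (gTau_eq_iff hτ.2).2 ⟨by omega, by omega, ha⟩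
  · exact (gTau_eq_iff hτ.2).2 ⟨by omega, by omega, hb⟩
  · exact (gTau_eq_iff hτ''.2).2 ⟨by omega, by omega, hb''⟩
  · refine (gTau_eq_iff hτ''.2).2 ⟨hda, by omega, ?_⟩
    rw [intCast_add_period, ← ha'', hτ''.1]
  · obtain ⟨hlt, hgt⟩ := gTau_mem_Ioo hτ.2 i
    refine (gTau_eq_iff hτ''.2).2 ⟨hlt, hgt, ?_⟩
    rw [intCast_gTau hτ.2]
    have hi := And.intro hai hia
    exact hagree _ (hne hi ⟨le_rfl, by omega⟩ hai.ne') (hne hi ⟨by omega, by omega⟩ hib)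
      (hne hi ⟨by omega, by omega⟩ hic) (hne hi ⟨by omega, by omega⟩ hid)

/-- The second kind of uncrossing becomes the first after renaming `a, b, c, d` to `b, c, d, a`. -/
lemma UncrossCover.exists_isUncrossing (h : UncrossCover τ' τ) :
    ∃ a b c d : ℤ, IsUncrossing (2 * n) (gTau n τ) (gTau n τ') a b c d := by
  obtain ⟨hτ', hτ, A, B, C, D, hcyc, hA, hB, hagree, ⟨hA', hB', -⟩ | ⟨hA', hC', -⟩⟩ := h
  · obtain ⟨a, b, c, d, hord, rfl, rfl, rfl, rfl⟩ := cyclicOrder4_iff_exists_intCast.1 hcyc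
    exact ⟨a, b, c, d, isUncrossing_gTau hτ hτ' hord hA hB hA' hB' hagree⟩
  · have hcyc' : CyclicOrder4 B C D A := by
      unfold CyclicOrder4 at hcyc ⊢
      tauto
    obtain ⟨b, c, d, a, hord, rfl, rfl, rfl, rfl⟩ := cyclicOrder4_iff_exists_intCast.1 hcyc'
    have hC : τ c = a := by rw [← hA, hτ.1]
    have hB' : τ' b = a := by rw [← hA', hτ'.1]
    exact ⟨b, c, d, a, isUncrossing_gTau hτ hτ' hord hB hC hB' hC'
      fun x hb hc hd ha => hagree x ha hb hc hd⟩

lemma UncrossCover.pairCount_lt (h : UncrossCover τ' τ) :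
    pairCount (gTau n τ) < pairCount (gTau n τ') := by
  obtain ⟨a, b, c, d, hu⟩ := h.exists_isUncrossing
  exact hu.pairCount_lt (isPairingLift_gTau h.2.1) (isPairingLift_gTau h.1)

lemma notMem_cIoo_of_gTau_notMem_Ioo (hτ : IsMatching τ) {a b c d : ℤ}
    (hord : a < b ∧ b < c ∧ c < d ∧ d < a + (2 * n : ℕ))
    (hno : ∀ i ∈ Ioo a b, gTau n τ i ∉ Ioo c d) {x : Fin (2 * n)}
    (hx : x ∈ cIoo (a : Fin (2 * n)) b) : τ x ∉ cIoo (c : Fin (2 * n)) d := by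
  obtain ⟨hab, hbc, hcd, hda⟩ := hord
  obtain ⟨i, hi, rfl⟩ := exists_intCast_eq_of_mem_cIoo hab (by omega) hx
  intro hτx
  obtain ⟨j, hj, hj'⟩ := exists_intCast_eq_of_mem_cIoo hcd (by omega) hτx
  have hgi : gTau n τ i = j := by
    rw [mem_Ioo] at hi hj
    exact (gTau_eq_iff hτ.2).2 ⟨by omega, by omega, hj'.symm⟩
  exact hno i hi (hgi ▸ hj)

lemma exists_uncrossCover (hτ : IsMatching τ) (hτ' : IsMatching τ') (hne : τ ≠ τ')
    (hle : pairCount (gTau n τ) ≤ pairCount (gTau n τ')) :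
    ∃ τ'', UncrossCover τ'' τ ∧ pairCount (gTau n τ'') ≤ pairCount (gTau n τ') := by
  have hg := isPairingLift_gTau hτ
  have hg' := isPairingLift_gTau hτ'
  obtain ⟨a, b, c, d, hab, hbc, hcd, hda, ga, gb, hno, hlt⟩ :=
    hg.exists_uncrossable hg' (fun h => hne (gTau_injOn hτ hτ' h)) hle
  have hord : a < b ∧ b < c ∧ c < d ∧ d < a + (2 * n : ℕ) := ⟨hab, hbc, hcd, hda⟩
  have ha : τ a = c := by rw [← ga, intCast_gTau hτ.2]
  have hb : τ b = d := by rw [← gb, intCast_gTau hτ.2]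
  obtain ⟨τ'', hτ'', ha'', hb'', hagree⟩ := hτ.exists_uncross ha hb
    ((intCast_injOn_Ico a).ne ⟨le_rfl, by omega⟩ ⟨by omega, hda⟩ (by omega))
    ((intCast_injOn_Ico a).ne ⟨hab.le, by omega⟩ ⟨by omega, by omega⟩ hbc.ne)
  have hcyc : CyclicOrder4 (a : Fin (2 * n)) b c d :=
    cyclicOrder4_iff_exists_intCast.2 ⟨a, b, c, d, hord, rfl, rfl, rfl, rfl⟩
  refine ⟨τ'', ⟨hτ'', hτ, a, b, c, d, hcyc, ha, hb, hagree, .inl ⟨ha'', hb'', fun x hx => ?_⟩⟩, ?_⟩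
  · exact notMem_cIoo_of_gTau_notMem_Ioo hτ hord hno hx
  · exact (isUncrossing_gTau hτ hτ'' hord ha hb ha'' hb'' hagree).pairCount_le hg
      (isPairingLift_gTau hτ'') hg' hle hlt

lemma uncrossLE_iff_pairCount_le (hτ : IsMatching τ) (hτ' : IsMatching τ') :
    uncrossLE τ' τ ↔ pairCount (gTau n τ) ≤ pairCount (gTau n τ') := by
  constructor
  · intro h
    induction h with
    | refl => exact le_rfl
    | tail _ hcover ih => exact hcover.pairCount_lt.le.trans (ih hcover.1)
  · intro hle
    obtain ⟨σ, ⟨hσ, hστ, hσle⟩, hmax⟩ := (Set.toFinite {σ | IsMatching σ ∧ uncrossLE σ τ ∧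
      pairCount (gTau n σ) ≤ pairCount (gTau n τ')}).exists_maximalFor
        (fun σ => pairCount (gTau n σ)) _ ⟨τ, hτ, .refl, hle⟩
    by_cases hne : σ = τ'
    · exact hne ▸ hστ
    · obtain ⟨σ', hcover, hle'⟩ := exists_uncrossCover hσ hτ' hne hσle
      exact absurd (hmax ⟨hcover.1, .head hcover hστ, hle'⟩ hcover.pairCount_lt.le)
        hcover.pairCount_lt.not_ge

/-! ### Rank matrices and necklaces as pair counts -/

lemma rankMat_fTau (hτ : IsMatching τ) (i j : ℤ) :
    rankMat (fTau n τ) i j = pairCount (gTau n τ) (j + 1 - (2 * n : ℕ)) i := by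
  have hg := isPairingLift_gTau hτ
  rw [pairCount, ← card_image_of_injective _ hg.injective, rankMat, ← Set.ncard_coe_finset]
  congr 1
  ext k
  have := hg.apply_lt k
  have hpartner : gTau n τ (gTau n τ k - (2 * n : ℕ)) = k := hg.apply_eq_iff.2 rfl
  simp only [fTau, Set.mem_ofPred_eq, coe_image, coe_filter, mem_Icc, Set.mem_image]
  constructor
  · rintro ⟨hki, hjk⟩
    exact ⟨_, ⟨⟨by omega, by omega⟩, by rwa [hpartner]⟩, hpartner⟩
  · rintro ⟨b, ⟨⟨hjb, -⟩, hbi⟩, rfl⟩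
    have := hg.apply_apply b
    omega

lemma bruhatLE_fTau_iff (hτ : IsMatching τ) (hτ' : IsMatching τ') :
    bruhatLE (fTau n τ) (fTau n τ') ↔ pairCount (gTau n τ) ≤ pairCount (gTau n τ') := by
  simp only [bruhatLE, rankMat_fTau hτ, rankMat_fTau hτ', Pi.le_def]
  refine ⟨fun h x y => ?_, fun h i j => h _ _⟩
  have hx : x - 1 + (2 * n : ℕ) + 1 - (2 * n : ℕ) = x := by omega
  simpa only [hx] using h y (x - 1 + (2 * n : ℕ))

lemma card_filter_le_orderEmbOfFin {m k : ℕ} {I : Finset (Fin m)} (hI : #I = k) (t : Fin m) :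
    #{r | t ≤ I.orderEmbOfFin hI r} = #{x ∈ I | t ≤ x} := by
  conv_rhs => rw [← map_orderEmbOfFin_univ I hI, filter_map, card_map]
  rfl

lemma domLE_iff_card_filter_le {m k : ℕ} {I J : Finset (Fin m)} (hI : #I = k) (hJ : #J = k) :
    domLE k I J ↔ ∀ t, #{x ∈ I | t ≤ x} ≤ #{x ∈ J | t ≤ x} := by
  simp only [← card_filter_le_orderEmbOfFin hI, ← card_filter_le_orderEmbOfFin hJ]
  constructor
  · rintro ⟨_, _, h⟩ t
    exact card_le_card (monotone_filter_right _ fun r _ hr => hr.trans (h r))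
  · intro h
    refine ⟨hI, hJ, fun r => ?_⟩
    by_contra! hlt
    refine (h (I.orderEmbOfFin hI r)).not_gt (card_lt_card ((ssubset_iff_of_subset ?_).2 ?_))
    · intro s hs
      simp only [mem_filter_univ, OrderEmbedding.le_iff_le] at hs ⊢
      exact ((J.orderEmbOfFin hJ).lt_iff_lt.1 (hlt.trans_le hs)).le
    · exact ⟨r, by simp, by simpa using hlt⟩

lemma mem_image_sub_necklaceI (hτ : IsMatching τ) {a y : Fin (2 * n)} :
    y ∈ (necklaceI (2 * n) (fTau n τ) (a : ℕ)).image (· - a) ↔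
      gTau n τ (a + y + 1) < a + (2 * n : ℕ) := by
  have hg := isPairingLift_gTau hτ
  simp only [necklaceI, fTau, mem_image, mem_filter_univ, emod_eq_val_iff, sub_eq_iff_eq_add]
  constructor
  · rintro ⟨x, ⟨b, hba, hab, hx⟩, rfl⟩
    have hgb : gTau n τ b - 1 = a + y := by
      have := hg.apply_lt b
      refine intCast_injOn_Ico (m := 2 * n) a ⟨by omega, by omega⟩ ⟨by omega, by omega⟩ ?_
      simpa [add_comm] using hx
    have := hg.apply_eq_iff.1 (eq_add_of_sub_eq hgb)
    omega
  · intro h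
    have hpartner : gTau n τ (gTau n τ (a + y + 1) - (2 * n : ℕ)) = a + y + 1 :=
      hg.apply_eq_iff.2 rfl
    refine ⟨_, ⟨gTau n τ (a + y + 1) - (2 * n : ℕ), by omega, by omega, rfl⟩, ?_⟩
    rw [hpartner]
    simp [add_comm]

lemma card_filter_image_sub_necklaceI (hτ : IsMatching τ) (a t : Fin (2 * n)) :
    #{y ∈ (necklaceI (2 * n) (fTau n τ) (a : ℕ)).image (· - a) | t ≤ y} =
      pairCount (gTau n τ) (a + t + 1) (a + (2 * n : ℕ) - 1) := by
  have hinj : Function.Injective fun y : Fin (2 * n) => (a : ℤ) + y + 1 := fun y z h => by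
    simpa [Fin.ext_iff] using h
  rw [pairCount, ← card_image_of_injective _ hinj]
  congr 1
  ext i
  simp only [mem_image (f := fun y : Fin (2 * n) => (a : ℤ) + y + 1), mem_filter,
    mem_image_sub_necklaceI hτ, mem_Icc, Fin.le_def]
  constructor
  · rintro ⟨y, ⟨hy, hty⟩, rfl⟩
    have := (isPairingLift_gTau hτ).lt_apply (a + y + 1)
    omega
  · rintro ⟨⟨hti, hia⟩, hi⟩
    have hval : (a : ℤ) + (i - a - 1).toNat + 1 = i := by omega
    exact ⟨⟨(i - a - 1).toNat, by omega⟩, ⟨by rw [hval]; omega, by simp only; omega⟩, hval⟩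

lemma card_image_sub_necklaceI (hτ : IsMatching τ) (a : Fin (2 * n)) :
    #((necklaceI (2 * n) (fTau n τ) (a : ℕ)).image (· - a)) = n - 1 := by
  have hcard := card_filter_image_sub_necklaceI hτ a 0
  rw [filter_true_of_mem fun y _ => Fin.zero_le y] at hcard
  have hg := isPairingLift_gTau hτ
  have hperiod := hg.two_mul_pairCount_period a
  have := hg.apply_lt a
  rw [hg.pairCount_succ_left, if_pos (by omega)] at hperiod
  rw [Fin.val_zero, Nat.cast_zero, add_zero] at hcard
  omega

lemma forall_sdomLE_necklaceI_iff (hτ : IsMatching τ) (hτ' : IsMatching τ') :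
    (∀ a : Fin (2 * n), sdomLE (n - 1) a (necklaceI (2 * n) (fTau n τ) (a : ℕ))
      (necklaceI (2 * n) (fTau n τ') (a : ℕ))) ↔
      pairCount (gTau n τ) ≤ pairCount (gTau n τ') := by
  have hg := isPairingLift_gTau hτ
  have hg' := isPairingLift_gTau hτ'
  simp only [sdomLE, domLE_iff_card_filter_le (card_image_sub_necklaceI hτ _)
    (card_image_sub_necklaceI hτ' _), card_filter_image_sub_necklaceI hτ,
    card_filter_image_sub_necklaceI hτ']
  refine ⟨fun h => ?_, fun h a t => h _ _⟩
  refine hg.pairCount_le_of_avoiding hg' ((2 * n : ℕ) - 1) fun x y hx hy => ?_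
  by_cases hyx : y < x
  · rw [pairCount_of_lt hyx, pairCount_of_lt hyx]
  · have hle := h ⟨(y + 1 - (2 * n : ℕ)).toNat, by omega⟩
      ⟨(x + (2 * n : ℕ) - y - 2).toNat, by omega⟩
    convert hle using 2 <;> simp only <;> omega

end GTau
end

theorem stmt8 (n : ℕ) (hn : 0 < n) (τ τ' : Fin (2*n) → Fin (2*n))
    (hτ : IsMatching τ) (hτ' : IsMatching τ') :
    (uncrossLE τ' τ ↔ bruhatLE (fTau n τ) (fTau n τ')) ∧
    (uncrossLE τ' τ ↔ ∀ a : Fin (2*n),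
      sdomLE (n-1) a (necklaceI (2*n) (fTau n τ) ((a:ℕ):ℤ))
        (necklaceI (2*n) (fTau n τ') ((a:ℕ):ℤ))) := by
  have : NeZero n := ⟨hn.ne'⟩
  rw [uncrossLE_iff_pairCount_le hτ hτ', bruhatLE_fTau_iff hτ hτ',
    forall_sdomLE_necklaceI_iff hτ hτ']
  exact ⟨Iff.rfl, Iff.rfl⟩

end
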